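/- Two-point minimax lower bound (core of Theorem 3): Let P₁ and P₂ be probability measures on a measurable space Ω with klDiv(P₁ ‖ P₂) ≤ 1/n for some integer n ≥ 1, and let v₁, v₂ ∈ ℝ. Then for every measurable estimator v̂ : Ωⁿ → ℝ computed from n i.i.d. samples, max(∫ (v̂ − v₁)² dP₁^{⊗n}, ∫ (v̂ − v₂)² dP₂^{⊗n}) ≥ (v₁ − v₂)² / (16e). -/

import Mathlib

open MeasureTheory
open scoped ENNReal

open Classical in
/-- The Kullback–Leibler divergence `∫ log(dP/dQ) dP`, taken to be `+∞` when `P` is not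
absolutely continuous with respect to `Q` (or the log-likelihood ratio is not
`P`-integrable). -/
noncomputable def klDiv {Ω : Type*} [MeasurableSpace Ω] (P Q : Measure Ω) : EReal :=
  if P ≪ Q ∧ Integrable (llr P Q) P then ((∫ ω, llr P Q ω ∂P : ℝ) : EReal) else ⊤

lemma aux_lintegral_prod {Ω : Type*} [MeasurableSpace Ω] (P : Measure Ω) [IsProbabilityMeasure P]
    (n : ℕ) (g : Fin n → Ω → ℝ≥0∞) (hg : ∀ i, Measurable (g i)) :
    ∫⁻ x, ∏ i, g i (x i) ∂(Measure.pi fun _ : Fin n => P) = ∏ i, ∫⁻ ω, g i ω ∂P := by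
  have h := ProbabilityTheory.iIndepFun_pi (μ := fun _ : Fin n => P) (X := fun i => g i)
    (fun i => (hg i).aemeasurable)
  rw [ProbabilityTheory.lintegral_prod_eq_prod_lintegral_of_indepFun Finset.univ
    (fun i (x : Fin n → Ω) => g i (x i)) h (fun i => (hg i).comp (measurable_pi_apply i))]
  refine Finset.prod_congr rfl fun i _ => ?_
  exact (measurePreserving_eval (fun _ : Fin n => P) i).lintegral_comp (hg i)

lemma aux_pi_withDensity {Ω : Type*} [MeasurableSpace Ω] (P Q : Measure Ω)
    [IsProbabilityMeasure P] [IsProbabilityMeasure Q] (n : ℕ) (f : Ω → ℝ≥0∞) (hf : Measurable f)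
    (h : P = Q.withDensity f) :
    (Measure.pi fun _ : Fin n => P)
      = (Measure.pi fun _ : Fin n => Q).withDensity (fun x => ∏ i, f (x i)) := by
  refine Measure.pi_eq fun s hs => ?_
  rw [withDensity_apply _ (MeasurableSet.univ_pi hs),
    ← lintegral_indicator (MeasurableSet.univ_pi hs)]
  have : (Set.univ.pi s).indicator (fun x : Fin n → Ω => ∏ i, f (x i))
      = fun x => ∏ i, (s i).indicator f (x i) := by
    ext x
    by_cases hx : x ∈ Set.univ.pi s
    · rw [Set.indicator_of_mem hx]
      refine Finset.prod_congr rfl fun i _ => ?_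
      rw [Set.indicator_of_mem (hx i trivial)]
    · rw [Set.indicator_of_notMem hx]
      simp only [Set.mem_pi, Set.mem_univ, true_imp_iff, not_forall] at hx
      obtain ⟨i, hi⟩ := hx
      exact (Finset.prod_eq_zero (Finset.mem_univ i) (Set.indicator_of_notMem hi f)).symm
  rw [this, aux_lintegral_prod Q n _ (fun i => hf.indicator (hs i))]
  refine Finset.prod_congr rfl fun i _ => ?_
  rw [lintegral_indicator (hs i), h, withDensity_apply _ (hs i)]

lemma aux_affinity {Ω : Type*} [MeasurableSpace Ω] (P Q : Measure Ω)
    [IsProbabilityMeasure P] [IsProbabilityMeasure Q] (hac : P ≪ Q)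
    (hint : Integrable (llr P Q) P) :
    ENNReal.ofReal (Real.exp (-(∫ ω, llr P Q ω ∂P) / 2))
      ≤ ∫⁻ ω, (P.rnDeriv Q ω) ^ (1 / 2 : ℝ) ∂Q := by
  set K := ∫ ω, llr P Q ω ∂P with hK
  let g : Ω → ℝ := fun ω => Real.exp (-K / 2) * (1 - (llr P Q ω - K) / 2)
  have hgi : Integrable g P :=
    ((integrable_const 1).sub ((hint.sub (integrable_const K)).div_const 2)).const_mul _
  have hg : ∫ ω, g ω ∂P = Real.exp (-K / 2) := by
    have hd : Integrable (fun ω => (llr P Q ω - K) / 2) P :=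
      (hint.sub (integrable_const K)).div_const 2
    simp only [g]
    rw [integral_const_mul, integral_sub (integrable_const 1) hd, integral_div,
      integral_sub hint (integrable_const K)]
    simp [← hK]
  calc ENNReal.ofReal (Real.exp (-K / 2)) = ENNReal.ofReal (∫ ω, g ω ∂P) := by rw [hg]
    _ ≤ ENNReal.ofReal (∫ ω, max (g ω) 0 ∂P) :=
        ENNReal.ofReal_le_ofReal (integral_mono hgi hgi.pos_part fun ω => le_max_left _ _)
    _ = ∫⁻ ω, ENNReal.ofReal (max (g ω) 0) ∂P :=
        ofReal_integral_eq_lintegral_ofReal hgi.pos_part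
          (Filter.Eventually.of_forall fun ω => le_max_right _ _)
    _ ≤ ∫⁻ ω, ENNReal.ofReal (Real.exp (-llr P Q ω / 2)) ∂P := by
        refine lintegral_mono fun ω => ENNReal.ofReal_le_ofReal (max_le ?_ (Real.exp_pos _).le)
        have h1 := Real.add_one_le_exp (-(llr P Q ω - K) / 2)
        have h2 : Real.exp (-llr P Q ω / 2)
            = Real.exp (-K / 2) * Real.exp (-(llr P Q ω - K) / 2) := by
          rw [← Real.exp_add]; congr 1; ring
        rw [h2]
        exact mul_le_mul_of_nonneg_left (by linarith) (Real.exp_pos _).le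
    _ = ∫⁻ ω, P.rnDeriv Q ω * ENNReal.ofReal (Real.exp (-llr P Q ω / 2)) ∂Q := by
        rw [lintegral_rnDeriv_mul hac]
        have := measurable_llr P Q
        fun_prop
    _ ≤ ∫⁻ ω, (P.rnDeriv Q ω) ^ (1 / 2 : ℝ) ∂Q := by
        refine lintegral_mono_ae ?_
        filter_upwards [Measure.rnDeriv_lt_top P Q] with ω hω
        by_cases h0 : P.rnDeriv Q ω = 0
        · simp [h0]
        have hpos : 0 < (P.rnDeriv Q ω).toReal := ENNReal.toReal_pos h0 hω.ne
        rw [llr_def]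
        dsimp only
        set t := (P.rnDeriv Q ω).toReal with ht
        have : P.rnDeriv Q ω = ENNReal.ofReal t := (ENNReal.ofReal_toReal hω.ne).symm
        rw [this, ENNReal.ofReal_rpow_of_pos hpos, ← ENNReal.ofReal_mul hpos.le]
        refine ENNReal.ofReal_le_ofReal (le_of_eq ?_)
        rw [Real.rpow_def_of_pos hpos]
        nth_rewrite 1 [← Real.exp_log hpos]
        rw [← Real.exp_add]; congr 1; ring

lemma aux_CS {α : Type*} [MeasurableSpace α] (μ : Measure α) (f g : α → ℝ≥0∞)
    (hf : Measurable f) (hg : Measurable g) (hg1 : ∫⁻ x, g x ^ 2 ∂μ ≤ 1) :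
    ∫⁻ x, f x * g x ∂μ ≤ (∫⁻ x, f x ^ 2 ∂μ) ^ (1 / 2 : ℝ) := by
  have h := ENNReal.lintegral_mul_le_Lp_mul_Lq μ Real.HolderConjugate.two_two
    hf.aemeasurable hg.aemeasurable
  simp only [ENNReal.rpow_ofNat, Pi.mul_apply] at h
  refine h.trans ?_
  calc _ ≤ (∫⁻ x, f x ^ 2 ∂μ) ^ (1 / 2 : ℝ) * 1 := by
        gcongr
        exact ENNReal.rpow_le_one hg1 (by norm_num)
    _ = _ := mul_one _

/-- Two-point minimax lower bound (core of Theorem 3): if `klDiv(P₁ ‖ P₂) ≤ 1/n`, then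
no estimator `v̂` computed from `n` i.i.d. samples can have squared-error risk smaller
than `(v₁ − v₂)²/(16e)` simultaneously under `P₁^{⊗n}` (with target `v₁`) and under
`P₂^{⊗n}` (with target `v₂`). -/
theorem two_point_minimax_lower_bound
    {Ω : Type*} [MeasurableSpace Ω] (P₁ P₂ : Measure Ω)
    [IsProbabilityMeasure P₁] [IsProbabilityMeasure P₂]
    (n : ℕ) (hn : 1 ≤ n)
    (hkl : klDiv P₁ P₂ ≤ ((1 / (n : ℝ) : ℝ) : EReal))
    (v₁ v₂ : ℝ) (vhat : (Fin n → Ω) → ℝ) (hvhat : Measurable vhat) :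
    ENNReal.ofReal ((v₁ - v₂) ^ 2 / (16 * Real.exp 1))
      ≤ max (∫⁻ x, ENNReal.ofReal ((vhat x - v₁) ^ 2) ∂(Measure.pi fun _ : Fin n => P₁))
          (∫⁻ x, ENNReal.ofReal ((vhat x - v₂) ^ 2) ∂(Measure.pi fun _ : Fin n => P₂)) := by
  by_cases hc : P₁ ≪ P₂ ∧ Integrable (llr P₁ P₂) P₁
  swap
  · rw [klDiv, if_neg hc] at hkl
    exact absurd (top_le_iff.mp hkl) (EReal.coe_ne_top _)
  rw [klDiv, if_pos hc, EReal.coe_le_coe_iff] at hkl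
  obtain ⟨hac, hint⟩ := hc
  have haff := aux_affinity P₁ P₂ hac hint
  set K := ∫ ω, llr P₁ P₂ ω ∂P₁ with hK
  have hn0 : (0 : ℝ) < n := by exact_mod_cast hn
  set s : Ω → ℝ≥0∞ := fun ω => (P₁.rnDeriv P₂ ω) ^ (1 / 2 : ℝ) with hs
  have hsm : Measurable s := (Measure.measurable_rnDeriv P₁ P₂).pow_const _
  have hs2 : P₁ = P₂.withDensity (fun ω => s ω ^ 2) := by
    have : (fun ω => s ω ^ 2) = P₁.rnDeriv P₂ := by
      ext ω
      simp only [hs]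
      rw [← ENNReal.rpow_natCast, ← ENNReal.rpow_mul]
      norm_num
    rw [this, Measure.withDensity_rnDeriv_eq _ _ hac]
  have hpi := aux_pi_withDensity P₁ P₂ n _ (hsm.pow_const 2) hs2
  have hprob : ∫⁻ x, (∏ i, s (x i)) ^ 2 ∂(Measure.pi fun _ : Fin n => P₂) = 1 := by
    have h1 : (Measure.pi fun _ : Fin n => P₁) Set.univ = 1 := measure_univ
    rw [hpi, withDensity_apply _ MeasurableSet.univ, Measure.restrict_univ] at h1
    simpa only [Finset.prod_pow] using h1
  have hrho := aux_lintegral_prod P₂ n (fun _ => s) (fun _ => hsm)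
  simp only [Finset.prod_const, Finset.card_univ, Fintype.card_fin] at hrho
  set S : (Fin n → Ω) → ℝ≥0∞ := fun x => ∏ i, s (x i) with hS
  have hSm : Measurable S :=
    Finset.measurable_fun_prod _ fun i _ => hsm.comp (measurable_pi_apply i)
  set Q := Measure.pi fun _ : Fin n => P₂ with hQ
  have hr : ENNReal.ofReal (Real.exp (-1 / 2)) ≤ ∫⁻ x, S x ∂Q := by
    have h1 : (ENNReal.ofReal (Real.exp (-K / 2))) ^ n ≤ (∫⁻ ω, s ω ∂P₂) ^ n := by
      gcongr
    refine le_trans ?_ (h1.trans hrho.ge)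
    rw [← ENNReal.ofReal_pow (Real.exp_pos _).le, ← Real.exp_nat_mul]
    refine ENNReal.ofReal_le_ofReal (Real.exp_le_exp.mpr ?_)
    have : (n : ℝ) * K ≤ 1 := by
      calc (n : ℝ) * K ≤ n * (1 / n) := mul_le_mul_of_nonneg_left hkl hn0.le
        _ = 1 := by field_simp
    linarith
  have hsq : ∀ v x, ENNReal.ofReal ((vhat x - v) ^ 2) = ENNReal.ofReal |vhat x - v| ^ 2 := by
    intro v x
    rw [← ENNReal.ofReal_pow (abs_nonneg _), sq_abs]
  have hm : ∀ v, Measurable fun x => ENNReal.ofReal |vhat x - v| := by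
    intro v
    exact ENNReal.measurable_ofReal.comp (hvhat.sub_const v).abs
  have hR1 : ∫⁻ x, ENNReal.ofReal |vhat x - v₁| * S x ∂Q
      ≤ (∫⁻ x, ENNReal.ofReal ((vhat x - v₁) ^ 2) ∂(Measure.pi fun _ : Fin n => P₁))
        ^ (1 / 2 : ℝ) := by
    have h := aux_CS Q (fun x => ENNReal.ofReal |vhat x - v₁| * S x) (fun _ => 1)
      ((hm v₁).mul hSm) measurable_const (by simp [hQ])
    simp only [mul_one] at h
    refine h.trans (le_of_eq ?_)
    congr 1
    rw [hpi, lintegral_withDensity_eq_lintegral_mul _ _ _]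
    · refine lintegral_congr fun x => ?_
      rw [Pi.mul_apply, hsq, mul_pow, mul_comm, Finset.prod_pow]
    · simpa only [Finset.prod_pow] using hSm.pow_const 2
    · simpa only [hsq] using (hm v₁).pow_const 2
  have hR2 : ∫⁻ x, ENNReal.ofReal |vhat x - v₂| * S x ∂Q
      ≤ (∫⁻ x, ENNReal.ofReal ((vhat x - v₂) ^ 2) ∂Q) ^ (1 / 2 : ℝ) := by
    simp only [hsq]
    exact aux_CS Q _ S (hm v₂) hSm hprob.le
  set R1 := ∫⁻ x, ENNReal.ofReal ((vhat x - v₁) ^ 2) ∂(Measure.pi fun _ : Fin n => P₁)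
  set R2 := ∫⁻ x, ENNReal.ofReal ((vhat x - v₂) ^ 2) ∂Q
  have key : ENNReal.ofReal (|v₁ - v₂| * Real.exp (-1 / 2)) ≤ 2 * (max R1 R2) ^ (1 / 2 : ℝ) := by
    calc ENNReal.ofReal (|v₁ - v₂| * Real.exp (-1 / 2))
        = ENNReal.ofReal |v₁ - v₂| * ENNReal.ofReal (Real.exp (-1 / 2)) :=
          ENNReal.ofReal_mul (abs_nonneg _)
      _ ≤ ENNReal.ofReal |v₁ - v₂| * ∫⁻ x, S x ∂Q := by gcongr
      _ = ∫⁻ x, ENNReal.ofReal |v₁ - v₂| * S x ∂Q := (lintegral_const_mul _ hSm).symm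
      _ ≤ ∫⁻ x, (ENNReal.ofReal |vhat x - v₁| * S x + ENNReal.ofReal |vhat x - v₂| * S x) ∂Q := by
          refine lintegral_mono fun x => ?_
          rw [← add_mul, ← ENNReal.ofReal_add (abs_nonneg _) (abs_nonneg _)]
          gcongr
          rw [abs_sub_comm (vhat x) v₁]
          exact abs_sub_le _ _ _
      _ = _ := lintegral_add_left ((hm v₁).mul hSm) _
      _ ≤ R1 ^ (1 / 2 : ℝ) + R2 ^ (1 / 2 : ℝ) := add_le_add hR1 hR2
      _ ≤ (max R1 R2) ^ (1 / 2 : ℝ) + (max R1 R2) ^ (1 / 2 : ℝ) := by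
          gcongr
          · exact le_max_left _ _
          · exact le_max_right _ _
      _ = _ := (two_mul _).symm
  by_cases htop : max R1 R2 = ⊤
  · rw [htop]; exact le_top
  set M := max R1 R2
  have hM : M = ENNReal.ofReal M.toReal := (ENNReal.ofReal_toReal htop).symm
  have hMn : 0 ≤ M.toReal := ENNReal.toReal_nonneg
  rw [hM] at key ⊢
  rw [ENNReal.ofReal_rpow_of_nonneg hMn (by norm_num), ← Real.sqrt_eq_rpow,
    ← ENNReal.ofReal_ofNat 2, ← ENNReal.ofReal_mul (by norm_num),
    ENNReal.ofReal_le_ofReal_iff (by positivity)] at key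
  refine ENNReal.ofReal_le_ofReal ?_
  have h2 := pow_le_pow_left₀ (by positivity) key 2
  rw [mul_pow, mul_pow, sq_abs, Real.sq_sqrt hMn, ← Real.exp_nat_mul] at h2
  have h3 : Real.exp ((2 : ℕ) * (-1 / 2)) = (Real.exp 1)⁻¹ := by
    rw [← Real.exp_neg]; norm_num
  rw [h3] at h2
  have h4 : (v₁ - v₂) ^ 2 / (16 * Real.exp 1) = ((v₁ - v₂) ^ 2 * (Real.exp 1)⁻¹) / 16 := by
    field_simp
  rw [h4]
  linarith
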